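/- arXiv:2201.03089 — 3 statements merged into one kernel-verified Lean document; each statement's English description precedes it below -/
import Mathlib

section
/- Let M be a finite monoid equipped with a Wilke ω-power ω, and let x ∈ M satisfy x J ω(x) (i.e. the J-class of x is ω-stable). Then the J-class of x is H-trivial: for all y, z ∈ M, if y J x and y H z, then y = z. -/
/-- Green's preorder `x ≤_L y`: `x = a·y` for some `a`. -/
def leL {M : Type*} [Monoid M] (x y : M) : Prop := ∃ a : M, x = a * y

/-- Green's preorder `x ≤_R y`: `x = y·b` for some `b`. -/
def leR {M : Type*} [Monoid M] (x y : M) : Prop := ∃ b : M, x = y * b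

/-- Green's preorder `x ≤_J y`: `x = a·y·b` for some `a, b`. -/
def leJ {M : Type*} [Monoid M] (x y : M) : Prop := ∃ a b : M, x = a * y * b

/-- Green's equivalence `L`. -/
def eqL {M : Type*} [Monoid M] (x y : M) : Prop := leL x y ∧ leL y x

/-- Green's equivalence `R`. -/
def eqR {M : Type*} [Monoid M] (x y : M) : Prop := leR x y ∧ leR y x

/-- Green's equivalence `J`. -/
def eqJ {M : Type*} [Monoid M] (x y : M) : Prop := leJ x y ∧ leJ y x

/-- Green's equivalence `H`. -/
def eqH {M : Type*} [Monoid M] (x y : M) : Prop := eqL x y ∧ eqR x y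

/-!
Since `ω x = x * ω x`, stability upgrades `x J ω x` to `x = ω x * c`, and then
`x * x = x * ω x * c = ω x * c = x`. Write `x = a * y * b`. Stability makes `y` regular, with
`k = y * (b * a)` an idempotent conjugate to `x`, and the relation `x R ω x` passes to `k R ω k`.
An element `z` with `y H z` has the form `g * y` for a unit `g` of the local monoid at `k`. With `h`
the inverse of `g`, `ω k = ω (g * h) = g * ω (h * g) = g * ω k`, hence `g * k = k` and `z = y`.
-/

section Green

variable {M : Type*} [Monoid M] {x y z : M}

theorem leJ.trans (hxy : leJ x y) (hyz : leJ y z) : leJ x z := by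
  obtain ⟨a, b, rfl⟩ := hxy
  obtain ⟨c, d, rfl⟩ := hyz
  exact ⟨a * c, d * b, by simp only [mul_assoc]⟩

theorem mul_leJ_left (a x : M) : leJ (a * x) x :=
  ⟨a, 1, (mul_one _).symm⟩

theorem mul_leJ_right (x b : M) : leJ (x * b) x :=
  ⟨1, b, by rw [one_mul]⟩

theorem leL.mul_mul_eq_self {v : M} (hzy : leL z y) (hv : y * v * y = y) : z * v * y = z := by
  obtain ⟨a, rfl⟩ := hzy
  simp only [mul_assoc] at hv ⊢
  rw [hv]

theorem eqH.exists_commute_mul_eq {v : M} (hyz : eqH y z) (hv : y * v * y = y) :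
    ∃ h, Commute (z * v) h ∧ z * v * h = y * v := by
  have hzvy : z * v * y = z := hyz.1.2.mul_mul_eq_self hv
  obtain ⟨⟨⟨a, ha⟩, -⟩, ⟨b, hb⟩, ⟨c, hc⟩⟩ := hyz
  have hay : a * y = y * b := by rw [hb, ← mul_assoc, ← ha, ← hb]
  have hright : z * v * (y * b * v) = y * v := by
    rw [← mul_assoc, ← mul_assoc, hzvy, ← hb]
  have hleft : y * b * v * (z * v) = y * v :=
    calc y * b * v * (z * v) = a * (y * v * y) * c * v := by
          rw [← hay, hc]
          simp only [mul_assoc]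
      _ = y * v := by rw [hv, mul_assoc a, ← hc, ← ha]
  exact ⟨y * b * v, hright.trans hleft.symm, hright⟩

end Green

section Stability

/-- A stable monoid in the sense of semigroup theory: a right multiple of `x` in the `J`-class of
`x` is in its `R`-class, and dually for left multiples and `L`. Only the nontrivial halves of these
equivalences are fields. Stability is what replaces finiteness in `stmt5_general`. -/
class IsStableMonoid (M : Type*) [Monoid M] : Prop where
  leR_mul_of_leJ : ∀ {x b : M}, leJ x (x * b) → leR x (x * b)
  leL_mul_of_leJ : ∀ {x a : M}, leJ x (a * x) → leL x (a * x)

variable {M : Type*} [Monoid M]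

theorem pow_mul_mul_pow_eq_self {p x q : M} (h : p * x * q = x) (n : ℕ) :
    p ^ n * x * q ^ n = x := by
  induction n with
  | zero => simp
  | succ n ih =>
    calc p ^ (n + 1) * x * q ^ (n + 1) = p ^ n * (p * x * q) * q ^ n := by
          rw [pow_succ, pow_succ']
          simp only [mul_assoc]
      _ = x := by rw [h, ih]

theorem exists_mul_pow_succ_eq_self {p x q : M} (hq : ∃ m d : ℕ, q ^ (m + (d + 1)) = q ^ m)
    (h : p * x * q = x) : ∃ d : ℕ, x * q ^ (d + 1) = x := by
  obtain ⟨m, d, hmd⟩ := hq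
  have hm := pow_mul_mul_pow_eq_self h m
  refine ⟨d, ?_⟩
  calc x * q ^ (d + 1) = p ^ m * x * q ^ m * q ^ (d + 1) := by rw [hm]
    _ = x := by rw [mul_assoc, ← pow_add, hmd, hm]

theorem exists_pow_succ_mul_eq_self {p x q : M} (hp : ∃ m d : ℕ, p ^ (m + (d + 1)) = p ^ m)
    (h : p * x * q = x) : ∃ d : ℕ, p ^ (d + 1) * x = x := by
  obtain ⟨m, d, hmd⟩ := hp
  have hm := pow_mul_mul_pow_eq_self h m
  refine ⟨d, ?_⟩
  calc p ^ (d + 1) * x = p ^ (d + 1) * (p ^ m * x * q ^ m) := by rw [hm]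
    _ = x := by rw [← mul_assoc, ← mul_assoc, ← pow_add, add_comm, hmd, hm]

theorem IsStableMonoid.of_forall_exists_pow_add_eq
    (hM : ∀ x : M, ∃ m d : ℕ, x ^ (m + (d + 1)) = x ^ m) : IsStableMonoid M where
  leR_mul_of_leJ := by
    rintro x b ⟨p, q, hx⟩
    obtain ⟨d, hd⟩ := exists_mul_pow_succ_eq_self (p := p) (x := x) (hM (b * q))
      (by simpa only [mul_assoc] using hx.symm)
    refine ⟨q * (b * q) ^ d, ?_⟩
    simpa only [pow_succ', mul_assoc] using hd.symm
  leL_mul_of_leJ := by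
    rintro x a ⟨p, q, hx⟩
    obtain ⟨d, hd⟩ := exists_pow_succ_mul_eq_self (x := x) (q := q) (hM (p * a))
      (by simpa only [mul_assoc] using hx.symm)
    refine ⟨(p * a) ^ d * p, ?_⟩
    simpa only [pow_succ, mul_assoc] using hd.symm

theorem exists_pow_add_eq_pow [Finite M] (x : M) : ∃ m d : ℕ, x ^ (m + (d + 1)) = x ^ m := by
  obtain ⟨m, n, hmn, h⟩ :=
    Set.finite_univ.exists_lt_map_eq_of_forall_mem (fun n : ℕ => Set.mem_univ (x ^ n))
  obtain ⟨d, rfl⟩ := Nat.exists_eq_add_of_lt hmn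
  exact ⟨m, d, h.symm⟩

instance IsStableMonoid.of_finite [Finite M] : IsStableMonoid M :=
  .of_forall_exists_pow_add_eq exists_pow_add_eq_pow

theorem IsStableMonoid.mul_mul_eq_self_of_isIdempotentElem [IsStableMonoid M]
    {a y b : M}
    (he : IsIdempotentElem (a * y * b)) (hy : leJ y (a * y * b)) : y * (b * a) * y = y := by
  obtain ⟨c, hc⟩ : leL y (a * y) := leL_mul_of_leJ (hy.trans (mul_leJ_right _ b))
  obtain ⟨d, hd⟩ : leR (a * y) (a * y * b) := leR_mul_of_leJ ((mul_leJ_left a y).trans hy)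
  have hfix : a * y * b * (a * y) = a * y := by
    nth_rw 2 [hd]
    rw [← mul_assoc, he.eq, ← hd]
  calc y * (b * a) * y = c * (a * y * b * (a * y)) := by
        nth_rw 1 [hc]
        simp only [mul_assoc]
    _ = y := by rw [hfix, ← hc]

end Stability

section OmegaPower

variable {M : Type*} [Monoid M] {om : M → M}

theorem mul_om_self (hommul : ∀ x y, om (x * y) = x * om (y * x)) (x : M) : x * om x = om x := by
  simpa only [mul_one, one_mul] using (hommul x 1).symm

theorem isIdempotentElem_of_leR_om (hommul : ∀ x y, om (x * y) = x * om (y * x)) {x : M}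
    (hx : leR x (om x)) : IsIdempotentElem x := by
  obtain ⟨c, hc⟩ := hx
  calc x * x = x * om x * c := by rw [mul_assoc, ← hc]
    _ = x := by rw [mul_om_self hommul, ← hc]

theorem leR_om_mul_comm (hommul : ∀ x y, om (x * y) = x * om (y * x)) {a b : M}
    (hab : leR (a * b) (om (a * b))) (hba : IsIdempotentElem (b * a)) :
    leR (b * a) (om (b * a)) := by
  obtain ⟨c, hc⟩ := hab
  refine ⟨c * a, ?_⟩
  calc b * a = b * (a * b) * a := by
        rw [← hba.eq]
        simp only [mul_assoc]
    _ = om (b * a) * (c * a) := by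
        rw [hc, hommul b a]
        simp only [mul_assoc]

theorem mul_mul_eq_of_commute_of_leR_om (hommul : ∀ x y, om (x * y) = x * om (y * x)) {g h : M}
    (hgh : Commute g h) (hR : leR (g * h) (om (g * h))) : g * (g * h) = g * h := by
  obtain ⟨c, hc⟩ := hR
  have hfix : g * om (g * h) = om (g * h) :=
    calc g * om (g * h) = g * om (h * g) := by rw [hgh.eq]
      _ = om (g * h) := (hommul g h).symm
  rw [hc, ← mul_assoc, hfix]

theorem eq_of_eqH_of_leR_om (hommul : ∀ x y, om (x * y) = x * om (y * x)) {y z v : M}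
    (hv : y * v * y = y) (hR : leR (y * v) (om (y * v))) (hyz : eqH y z) : y = z := by
  have hzvy : z * v * y = z := hyz.1.2.mul_mul_eq_self hv
  obtain ⟨h, hcomm, hmul⟩ := hyz.exists_commute_mul_eq hv
  have hunit : z * v * (y * v) = y * v := by
    rw [← hmul] at hR ⊢
    exact mul_mul_eq_of_commute_of_leR_om hommul hcomm hR
  calc y = z * v * (y * v) * y := by rw [hunit, hv]
    _ = z := by rw [mul_assoc, hv, hzvy]

theorem stmt5_general [IsStableMonoid M] (hommul : ∀ x y, om (x * y) = x * om (y * x)) {x : M}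
    (hx : leJ x (om x)) {y z : M} (hyx : eqJ y x) (hyz : eqH y z) : y = z := by
  have hxR : leR x (om x) := by
    simpa only [mul_om_self hommul] using
      IsStableMonoid.leR_mul_of_leJ (x := x) (b := om x) (by rwa [mul_om_self hommul])
  have he : IsIdempotentElem x := isIdempotentElem_of_leR_om hommul hxR
  obtain ⟨hle, a, b, rfl⟩ := hyx
  have hreg : y * (b * a) * y = y :=
    IsStableMonoid.mul_mul_eq_self_of_isIdempotentElem he hle
  have hk : IsIdempotentElem (y * b * a) := by
    rw [IsIdempotentElem, mul_assoc y, ← mul_assoc, hreg]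
  have hkR : leR (y * (b * a)) (om (y * (b * a))) := by
    rw [mul_assoc] at hxR
    simpa only [mul_assoc] using leR_om_mul_comm hommul hxR hk
  exact eq_of_eqH_of_leR_om hommul hreg hkR hyz

end OmegaPower

theorem stmt5 {M : Type*} [Monoid M] [Fintype M]
    (om : M → M)
    (hom1 : om 1 = 1)
    (hompow : ∀ x : M, ∀ n : ℕ, 1 ≤ n → om (x ^ n) = om x)
    (hommul : ∀ x y : M, om (x * y) = x * om (y * x))
    (x : M)
    (hJ : eqJ x (om x)) :
    ∀ y z : M, eqJ y x → eqH y z → y = z :=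
  fun _ _ => stmt5_general hommul hJ.1
end

section
/- Let M be a finite monoid. Then the powerset of M, equipped with the pointwise product, the unit {1}, the inclusion order, and the operation K as merge, satisfies all the axioms of a finite ordered monoid with merge; explicitly: the pointwise product is monotone for inclusion in both arguments; K is inclusion-monotone; K(E) = E for every E ⊆ M with E·E = E; K(A)·K(A) = K(A) and K(K(A)) = K(A) for every A ⊆ M; K(A·B) = A·K(B·A)·B for all A, B ⊆ M; and for every A ⊆ M there exists N ∈ ℕ such that A^m ⊆ K(A) for all m ≥ N. -/
open Pointwise

/-- The merge of a subset `A` of a monoid: `K(A) = ⋂_{n≥1} ⋃_{m≥n} A^m`,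
where `A^m` is the `m`-fold pointwise product. -/
def mergeSet {M : Type*} [Monoid M] (A : Set M) : Set M :=
  ⋂ (n : ℕ) (_ : 1 ≤ n), ⋃ (m : ℕ) (_ : n ≤ m), A ^ m

/-!
The merge of `A` is the limit superior of its powers. If `A` has only finitely many powers, each of
them either recurs infinitely often, and is then contained in the merge, or stops occurring; hence
all sufficiently large powers lie in the merge. The nontrivial inclusions follow from this: an
element of the merge lies in arbitrarily large powers, and when such a power is written as a
product, the factors that are themselves large powers are absorbed by a merge.
-/

open Filter

theorem mul_pow_succ_eq_mul_pow_mul {M : Type*} [Monoid M] (a b : M) (n : ℕ) :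
    (a * b) ^ (n + 1) = a * (b * a) ^ n * b := by
  rw [pow_succ, ← mul_assoc, mul_pow_mul]

theorem eventually_le_limsup_of_finite_range {ι α : Type*} [CompleteLattice α] {f : Filter ι}
    {u : ι → α} (hu : (Set.range u).Finite) : ∀ᶠ i in f, u i ≤ limsup u f := by
  have eventually_le_of_eq : ∀ a ∈ Set.range u, ∀ᶠ i in f, u i = a → a ≤ limsup u f := by
    intro a _
    by_cases h : ∃ᶠ i in f, u i = a
    · exact .of_forall fun _ _ => le_limsup_of_frequently_le (h.mono fun _ hi => hi.ge)
    · exact (not_frequently.1 h).mono fun _ hne heq => absurd heq hne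
  exact ((eventually_all_finite hu).2 eventually_le_of_eq).mono fun i hi =>
    hi (u i) (Set.mem_range_self i) rfl

section Merge

variable {M : Type*} [Monoid M] {A B E : Set M} {x : M}

theorem mem_mergeSet_iff_frequently : x ∈ mergeSet A ↔ ∃ᶠ n in atTop, x ∈ A ^ n := by
  simp only [mergeSet, Set.mem_iInter, Set.mem_iUnion, exists_prop,
    (atTop_basis' (1 : ℕ)).frequently_iff, Set.mem_Ici]

theorem mergeSet_eq_limsup (A : Set M) : mergeSet A = limsup (A ^ ·) atTop := by
  ext x
  rw [mem_mergeSet_iff_frequently, mem_limsup_iff_frequently_mem]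

theorem mem_mergeSet_iff_frequently_add (k : ℕ) :
    x ∈ mergeSet A ↔ ∃ᶠ n in atTop, x ∈ A ^ (n + k) := by
  rw [mem_mergeSet_iff_frequently]
  conv_lhs => rw [← map_add_atTop_eq_nat k, frequently_map]

theorem mergeSet_mono (h : A ⊆ B) : mergeSet A ⊆ mergeSet B := fun _ hx =>
  mem_mergeSet_iff_frequently.2 <|
    (mem_mergeSet_iff_frequently.1 hx).mono fun _ hn => Set.pow_subset_pow_left h hn

theorem mergeSet_eq_self_of_isIdempotentElem (hE : IsIdempotentElem E) : mergeSet E = E := by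
  ext x
  simp only [mem_mergeSet_iff_frequently_add 1, hE.pow_succ_eq, frequently_const]

theorem eventually_pow_subset_mergeSet (hA : (Submonoid.powers A : Set (Set M)).Finite) :
    ∀ᶠ n in atTop, A ^ n ⊆ mergeSet A := by
  rw [mergeSet_eq_limsup]
  exact eventually_le_limsup_of_finite_range hA

theorem mergeSet_mul_pow_subset (A : Set M) (k : ℕ) : mergeSet A * A ^ k ⊆ mergeSet A := by
  rintro _ ⟨x, hx, y, hy, rfl⟩
  refine (mem_mergeSet_iff_frequently_add k).2 ?_
  exact (mem_mergeSet_iff_frequently.1 hx).mono fun n hn => pow_add A n k ▸ Set.mul_mem_mul hn hy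

theorem mergeSet_mul_mergeSet_subset (A : Set M) : mergeSet A * mergeSet A ⊆ mergeSet A := by
  rintro _ ⟨x, hx, y, hy, rfl⟩
  obtain ⟨k, hyk⟩ := (mem_mergeSet_iff_frequently.1 hy).exists
  exact mergeSet_mul_pow_subset A k (Set.mul_mem_mul hx hyk)

theorem isIdempotentElem_mergeSet (hA : ∀ᶠ n in atTop, A ^ n ⊆ mergeSet A) :
    IsIdempotentElem (mergeSet A) := by
  refine (mergeSet_mul_mergeSet_subset A).antisymm fun x hx => ?_
  obtain ⟨k, hk⟩ := hA.exists
  obtain ⟨n, hxn, hn⟩ := (((mem_mergeSet_iff_frequently_add k).1 hx).and_eventually hA).exists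
  rw [pow_add] at hxn
  exact Set.mul_subset_mul hn hk hxn

theorem mul_mergeSet_mul_subset (A B : Set M) : A * mergeSet (B * A) * B ⊆ mergeSet (A * B) := by
  rintro _ ⟨_, ⟨a, ha, y, hy, rfl⟩, b, hb, rfl⟩
  refine (mem_mergeSet_iff_frequently_add 1).2 ((mem_mergeSet_iff_frequently.1 hy).mono ?_)
  intro n hyn
  rw [mul_pow_succ_eq_mul_pow_mul]
  exact Set.mul_mem_mul (Set.mul_mem_mul ha hyn) hb

theorem mergeSet_mul (hBA : ∀ᶠ n in atTop, (B * A) ^ n ⊆ mergeSet (B * A)) :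
    mergeSet (A * B) = A * mergeSet (B * A) * B := by
  refine Set.Subset.antisymm (fun x hx => ?_) (mul_mergeSet_mul_subset A B)
  obtain ⟨n, hxn, hn⟩ := (((mem_mergeSet_iff_frequently_add 1).1 hx).and_eventually hBA).exists
  rw [mul_pow_succ_eq_mul_pow_mul] at hxn
  exact Set.mul_subset_mul_right (Set.mul_subset_mul_left hn) hxn

end Merge

theorem stmt10_general {M : Type*} [Monoid M]
    (hM : ∀ A : Set M, (Submonoid.powers A : Set (Set M)).Finite) :
    (∀ A B C D : Set M, A ⊆ B → C ⊆ D → A * C ⊆ B * D) ∧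
    (∀ A B : Set M, A ⊆ B → mergeSet A ⊆ mergeSet B) ∧
    (∀ E : Set M, E * E = E → mergeSet E = E) ∧
    (∀ A : Set M, mergeSet A * mergeSet A = mergeSet A) ∧
    (∀ A : Set M, mergeSet (mergeSet A) = mergeSet A) ∧
    (∀ A B : Set M, mergeSet (A * B) = A * mergeSet (B * A) * B) ∧
    (∀ A : Set M, ∃ N : ℕ, ∀ m : ℕ, N ≤ m → A ^ m ⊆ mergeSet A) := by
  have absorb (A : Set M) : ∀ᶠ n in atTop, A ^ n ⊆ mergeSet A :=
    eventually_pow_subset_mergeSet (hM A)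
  have idem (A : Set M) : IsIdempotentElem (mergeSet A) := isIdempotentElem_mergeSet (absorb A)
  exact ⟨fun _ _ _ _ => Set.mul_subset_mul, fun _ _ => mergeSet_mono,
    fun _ => mergeSet_eq_self_of_isIdempotentElem, idem,
    fun A => mergeSet_eq_self_of_isIdempotentElem (idem A),
    fun A B => mergeSet_mul (absorb (B * A)), fun A => eventually_atTop.1 (absorb A)⟩

/-- The powerset of a finite monoid, with pointwise product, unit `{1}`,
inclusion order and the merge operation `K`, satisfies all the axioms of a
finite ordered monoid with merge. -/
theorem stmt10 {M : Type*} [Monoid M] [Fintype M] :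
    (∀ A B C D : Set M, A ⊆ B → C ⊆ D → A * C ⊆ B * D) ∧
    (∀ A B : Set M, A ⊆ B → mergeSet A ⊆ mergeSet B) ∧
    (∀ E : Set M, E * E = E → mergeSet E = E) ∧
    (∀ A : Set M, mergeSet A * mergeSet A = mergeSet A) ∧
    (∀ A : Set M, mergeSet (mergeSet A) = mergeSet A) ∧
    (∀ A B : Set M, mergeSet (A * B) = A * mergeSet (B * A) * B) ∧
    (∀ A : Set M, ∃ N : ℕ, ∀ m : ℕ, N ≤ m → A ^ m ⊆ mergeSet A) :=
  stmt10_general fun A => Set.toFinite (Submonoid.powers A : Set (Set M))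
end

section
/- Let M be a finite monoid equipped with a Wilke ω-power ω. If x ∈ M satisfies x J ω(x), then x is idempotent: x·x = x. -/
/-!
Expanding `ω (x ^ 2)` in two ways gives `x * ω x = ω x`. If moreover `x ≤_J ω x = x * ω x`,
stability upgrades this to `x = ω x * z` for some `z`, so left multiplication by `x`, which fixes
`ω x`, fixes `x` as well.

A finite monoid is stable because `x = a * x * t` can be iterated to `x = a ^ n * x * t ^ n`, and
a repetition `a ^ (m + k) = a ^ m` among the powers of `a` then yields `x = x * t ^ k`.
-/

section Stability

variable {M : Type*} [Monoid M]

/-- Right stability of a monoid, a finiteness condition: `x J x * y` implies `x R x * y`. Only the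
nontrivial halves of the two equivalences appear, as `x * y` always lies below `x` in both
preorders. -/
def IsRStable (M : Type*) [Monoid M] : Prop :=
  ∀ x y : M, leJ x (x * y) → ∃ z, x = x * y * z

theorem eq_pow_mul_mul_pow {a x t : M} (h : x = a * x * t) (n : ℕ) : x = a ^ n * x * t ^ n := by
  induction n with
  | zero => simp
  | succ n ih =>
    calc
      x = a ^ n * x * t ^ n := ih
      _ = a ^ n * (a * x * t) * t ^ n := by rw [← h]
      _ = a ^ (n + 1) * x * t ^ (n + 1) := by simp only [pow_succ a, pow_succ' t, mul_assoc]

theorem eq_mul_pow_of_eq_mul_mul {a x t : M} {m k : ℕ} (h : x = a * x * t)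
    (hpow : a ^ (m + k) = a ^ m) : x = x * t ^ k :=
  calc
    x = a ^ (m + k) * x * t ^ (m + k) := eq_pow_mul_mul_pow h _
    _ = a ^ m * x * t ^ m * t ^ k := by rw [hpow, pow_add, mul_assoc (a ^ m * x)]
    _ = x * t ^ k := by rw [← eq_pow_mul_mul_pow h]

theorem IsRStable.of_periodic (hM : ∀ a : M, ∃ m k : ℕ, a ^ (m + (k + 1)) = a ^ m) :
    IsRStable M := by
  rintro x y ⟨a, b, hx⟩
  obtain ⟨m, k, hpow⟩ := hM a
  have hfix : x = a * x * (y * b) := by simpa only [mul_assoc] using hx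
  refine ⟨b * (y * b) ^ k, ?_⟩
  calc
    x = x * (y * b) ^ (k + 1) := eq_mul_pow_of_eq_mul_mul hfix hpow
    _ = x * y * (b * (y * b) ^ k) := by simp only [pow_succ', mul_assoc]

theorem IsRStable.of_finite [Finite M] : IsRStable M := by
  refine .of_periodic fun a ↦ ?_
  obtain ⟨m, n, hlt, hpow⟩ := Set.finite_univ.exists_lt_map_eq_of_forall_mem
    (f := fun n : ℕ ↦ a ^ n) fun _ ↦ Set.mem_univ _
  obtain ⟨k, rfl⟩ := Nat.exists_eq_add_of_lt hlt
  exact ⟨m, k, hpow.symm⟩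

theorem IsRStable.isIdempotentElem_of_mul_eq_right (hM : IsRStable M) {x w : M} (hxw : x * w = w)
    (hle : leJ x w) : IsIdempotentElem x := by
  obtain ⟨z, hz⟩ : ∃ z, x = w * z := by simpa only [hxw] using hM x w (hxw.symm ▸ hle)
  calc
    x * x = x * (w * z) := by rw [← hz]
    _ = w * z := by rw [← mul_assoc, hxw]
    _ = x := hz.symm

end Stability

theorem mul_omega_self {M : Type*} [Monoid M] {om : M → M} {x : M} (hsq : om (x ^ 2) = om x)
    (hmul : om (x * x) = x * om (x * x)) : x * om x = om x := by
  rw [← pow_two, hsq] at hmul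
  exact hmul.symm

theorem stmt12_general {M : Type*} [Monoid M] (hM : IsRStable M) (om : M → M)
    (hompow : ∀ x : M, ∀ n : ℕ, 1 ≤ n → om (x ^ n) = om x)
    (hommul : ∀ x y : M, om (x * y) = x * om (y * x))
    (x : M) (hle : leJ x (om x)) : x * x = x :=
  hM.isIdempotentElem_of_mul_eq_right (mul_omega_self (hompow x 2 one_le_two) (hommul x x)) hle

theorem stmt12 {M : Type*} [Monoid M] [Fintype M]
    (om : M → M)
    (hom1 : om 1 = 1)
    (hompow : ∀ x : M, ∀ n : ℕ, 1 ≤ n → om (x ^ n) = om x)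
    (hommul : ∀ x y : M, om (x * y) = x * om (y * x))
    (x : M)
    (hJ : eqJ x (om x)) :
    x * x = x :=
  stmt12_general .of_finite om hompow hommul x hJ.1
end
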